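/- Suppose k ≥ 1 and d ≥ 2, and let G ⊆ P_n be a stabilizer group with parameters [[n,k,d;3]] (dim G = n − k, d(G) = d, W(G) = 3) that contains a nonzero element of weight < 3. Then there exist m < n and a partition of Fin n into a set of size n − m and a set of size m such that, under the induced identification P_n ≅ P_{n−m} × P_m, G decomposes as a tensor product G₁ ⊗ G₂, where G₁ is an (n−m)-dimensional isotropic subspace (a [[n−m,0]] code, d(G₁) = ⊤) with W(G₁) ≤ 3, and G₂ is a stabilizer group with parameters [[m,k,d]] and W(G₂) = 3. -/

import Mathlib

open scoped Classical

noncomputable section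

/-- Pauli strings modulo phase, indexed by a finite type. -/
abbrev PauliT (ι : Type) : Type := ι → ZMod 2 × ZMod 2

abbrev Pauli (n : ℕ) : Type := PauliT (Fin n)

variable {ι : Type} [Fintype ι]

/-- Weight of a Pauli string. -/
def wt (v : PauliT ι) : ℕ := (Finset.univ.filter fun i => v i ≠ 0).card

/-- Support of a Pauli string. -/
def suppF (v : PauliT ι) : Finset ι := Finset.univ.filter fun i => v i ≠ 0

/-- Symplectic form encoding commutation. -/
def sympl (u v : PauliT ι) : ZMod 2 :=
  ∑ i, ((u i).1 * (v i).2 + (u i).2 * (v i).1)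

/-- `G` is a stabilizer group (isotropic subspace). -/
def IsStabilizer (G : Submodule (ZMod 2) (PauliT ι)) : Prop :=
  ∀ u ∈ G, ∀ v ∈ G, sympl u v = 0

/-- Membership in the symplectic dual `G^⊥`. -/
def inDual (G : Submodule (ZMod 2) (PauliT ι)) (v : PauliT ι) : Prop :=
  ∀ g ∈ G, sympl v g = 0

/-- Distance: minimum weight of an element of `G^⊥ \ G`, `⊤` if none exists. -/
def distG (G : Submodule (ZMod 2) (PauliT ι)) : ℕ∞ :=
  sInf ((fun v => (wt v : ℕ∞)) '' {v | inDual G v ∧ v ∉ G})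

/-- `g` is an `𝔽₂`-basis (indexed family) of `G`. -/
def IsBasisFam {r : ℕ} (G : Submodule (ZMod 2) (PauliT ι)) (g : Fin r → PauliT ι) : Prop :=
  LinearIndependent (ZMod 2) g ∧ Submodule.span (ZMod 2) (Set.range g) = G

/-- The weight of a stabilizer group: optimal maximum generator weight over bases. -/
def Wgt (G : Submodule (ZMod 2) (PauliT ι)) : ℕ∞ :=
  ⨅ (r : ℕ) (g : Fin r → PauliT ι) (_ : IsBasisFam G g),
    Finset.univ.sup fun i => (wt (g i) : ℕ∞)

/-- Optimal weight over all `[[n,k,d]]` stabilizer codes. -/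
def Wopt (n k : ℕ) (d : ℕ∞) : ℕ∞ :=
  ⨅ (G : Submodule (ZMod 2) (Pauli n))
    (_ : IsStabilizer G ∧ Module.finrank (ZMod 2) ↥G = n - k ∧ distG G = d),
    Wgt G

/-- Weight enumerator: number of elements of `G` of weight `j`. -/
def Aj (G : Submodule (ZMod 2) (PauliT ι)) (j : ℕ) : ℕ :=
  Nat.card {g : PauliT ι // g ∈ G ∧ wt g = j}

/-- A weight-optimal generating set. -/
def IsWeightOptimalBasis {r : ℕ} (G : Submodule (ZMod 2) (PauliT ι))
    (g : Fin r → PauliT ι) : Prop :=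
  IsBasisFam G g ∧ Monotone (fun i => wt (g i)) ∧
    ∀ h : Fin r → PauliT ι, IsBasisFam G h → Monotone (fun i => wt (h i)) →
      ∀ i, wt (g i) ≤ wt (h i)

/-- Set of average generator weights over all bases of `G`. -/
def WavgSet (G : Submodule (ZMod 2) (PauliT ι)) : Set ℚ :=
  {x | ∃ (r : ℕ) (g : Fin r → PauliT ι), IsBasisFam G g ∧
        x = (∑ i, (wt (g i) : ℚ)) / (r : ℚ)}

/-- Splitting of Pauli strings along a bipartition given by a predicate. -/
def splitEquiv (p : ι → Prop) :
    PauliT ι ≃ₗ[ZMod 2] PauliT {x // p x} × PauliT {x // ¬ p x} :=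
  (LinearEquiv.funCongrLeft (ZMod 2) (ZMod 2 × ZMod 2) (Equiv.sumCompl p)).trans
    (LinearEquiv.sumArrowLequivProdArrow _ _ _ _)

/-- Tensor product of subspaces along a bipartition. -/
def tensorAlong (p : ι → Prop)
    (GA : Submodule (ZMod 2) (PauliT {x // p x}))
    (GB : Submodule (ZMod 2) (PauliT {x // ¬ p x})) :
    Submodule (ZMod 2) (PauliT ι) :=
  (GA.prod GB).comap (splitEquiv p).toLinearMap

/-- Decomposability as a tensor product over a nontrivial bipartition. -/
def Decomposable (G : Submodule (ZMod 2) (PauliT ι)) : Prop :=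
  ∃ p : ι → Prop, (∃ x, p x) ∧ (∃ x, ¬ p x) ∧
    ∃ (GA : Submodule (ZMod 2) (PauliT {x // p x}))
      (GB : Submodule (ZMod 2) (PauliT {x // ¬ p x})),
      G = tensorAlong p GA GB

/-- Identification of `Pauli (n₁+n₂)` with `Pauli n₁ × Pauli n₂`. -/
def pauliSumEquiv (n₁ n₂ : ℕ) :
    Pauli (n₁ + n₂) ≃ₗ[ZMod 2] Pauli n₁ × Pauli n₂ :=
  (LinearEquiv.funCongrLeft (ZMod 2) (ZMod 2 × ZMod 2) finSumFinEquiv).trans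
    (LinearEquiv.sumArrowLequivProdArrow _ _ _ _)

/-- Tensor product of stabilizer subspaces on `n₁` and `n₂` qubits. -/
def tensorFin {n₁ n₂ : ℕ} (G₁ : Submodule (ZMod 2) (Pauli n₁))
    (G₂ : Submodule (ZMod 2) (Pauli n₂)) :
    Submodule (ZMod 2) (Pauli (n₁ + n₂)) :=
  (G₁.prod G₂).comap (pauliSumEquiv n₁ n₂).toLinearMap


set_option linter.unusedSectionVars false

/-- Local symplectic form. -/
def lf (a b : ZMod 2 × ZMod 2) : ZMod 2 := a.1 * b.2 + a.2 * b.1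

/-- Supported on `A`. -/
def OnS (A : Finset ι) (v : PauliT ι) : Prop := ∀ i, i ∉ A → v i = 0

/-- Restriction to `A`. -/
def resS (A : Finset ι) (v : PauliT ι) : PauliT ι := fun i => if i ∈ A then v i else 0

lemma pauli_add_self (v : PauliT ι) : v + v = 0 := by
  funext i
  have : ∀ a : ZMod 2 × ZMod 2, a + a = 0 := by decide
  exact this _

lemma sympl_eq (u v : PauliT ι) : sympl u v = ∑ i, lf (u i) (v i) := rfl

lemma sympl_add_left (u v w : PauliT ι) : sympl (u + v) w = sympl u w + sympl v w := by
  simp only [sympl_eq, ← Finset.sum_add_distrib]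
  refine Finset.sum_congr rfl fun i _ => ?_
  simp only [lf, Pi.add_apply, Prod.fst_add, Prod.snd_add]; ring

lemma sympl_comm (u v : PauliT ι) : sympl u v = sympl v u := by
  simp only [sympl_eq]
  refine Finset.sum_congr rfl fun i _ => ?_
  simp only [lf]; ring

lemma sympl_add_right (u v w : PauliT ι) : sympl w (u + v) = sympl w u + sympl w v := by
  rw [sympl_comm, sympl_add_left, sympl_comm u, sympl_comm v]

lemma sympl_smul_left (c : ZMod 2) (v w : PauliT ι) : sympl (c • v) w = c * sympl v w := by
  simp only [sympl_eq, Finset.mul_sum]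
  refine Finset.sum_congr rfl fun i _ => ?_
  simp only [lf, Pi.smul_apply, Prod.smul_fst, Prod.smul_snd, smul_eq_mul]; ring

lemma sympl_smul_right (c : ZMod 2) (v w : PauliT ι) : sympl w (c • v) = c * sympl w v := by
  rw [sympl_comm, sympl_smul_left, sympl_comm]

lemma sympl_zero_left (w : PauliT ι) : sympl 0 w = 0 := by
  simp [sympl]

lemma sympl_zero_right (w : PauliT ι) : sympl w 0 = 0 := by
  simp [sympl]

lemma sympl_self (v : PauliT ι) : sympl v v = 0 := by
  rw [sympl_eq]
  refine Finset.sum_eq_zero fun i _ => ?_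
  have : ∀ a : ZMod 2 × ZMod 2, lf a a = 0 := by unfold lf; decide
  exact this _

lemma sympl_res_right {A : Finset ι} {v : PauliT ι} (hv : OnS A v) (u : PauliT ι) :
    sympl v (resS A u) = sympl v u := by
  simp only [sympl_eq]
  refine Finset.sum_congr rfl fun i _ => ?_
  by_cases h : i ∈ A
  · simp [resS, h]
  · simp [lf, hv i h]

lemma onS_res (A : Finset ι) (u : PauliT ι) : OnS A (resS A u) := by
  intro i h; simp [resS, h]

lemma onS_add {A : Finset ι} {u v : PauliT ι} (hu : OnS A u) (hv : OnS A v) : OnS A (u + v) := by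
  intro i h; simp [hu i h, hv i h]

lemma onS_mono {A B : Finset ι} (hAB : A ⊆ B) {u : PauliT ι} (hu : OnS A u) : OnS B u := by
  intro i h; exact hu i fun h' => h (hAB h')

lemma sympl_res_left {A : Finset ι} {v : PauliT ι} (hv : OnS A v) (u : PauliT ι) :
    sympl (resS A u) v = sympl u v := by
  rw [sympl_comm, sympl_res_right hv, sympl_comm]

lemma sympl_res_left' {A : Finset ι} (v : PauliT ι) (u : PauliT ι) :
    sympl (resS A u) v = sympl (resS A u) (resS A v) := by
  rw [sympl_res_right (onS_res _ _)]

lemma sympl_res_single (r : ι) (u v : PauliT ι) :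
    sympl (resS {r} u) v = lf (u r) (v r) := by
  rw [sympl_eq, Finset.sum_eq_single r]
  · simp [resS]
  · intro b _ hb; simp [resS, hb, lf]
  · simp

lemma zmod2_cases (a : ZMod 2) : a = 0 ∨ a = 1 := by revert a; decide

lemma wt_res_single (r : ι) (u : PauliT ι) : wt (resS {r} u) ≤ 1 := by
  unfold wt
  calc _ ≤ ({r} : Finset ι).card := by
        apply Finset.card_le_card
        intro i hi
        by_contra h
        simp at h
        simp [resS, h] at hi
    _ = 1 := by simp

lemma mem_of_dist {G : Submodule (ZMod 2) (PauliT ι)} (hd : 2 ≤ distG G) {v : PauliT ι}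
    (hv : inDual G v) (hw : wt v ≤ 1) : v ∈ G := by
  by_contra h
  have h1 : distG G ≤ (wt v : ℕ∞) := sInf_le ⟨v, ⟨hv, h⟩, rfl⟩
  have h2 : (2 : ℕ∞) ≤ (wt v : ℕ∞) := hd.trans h1
  have : 2 ≤ wt v := by exact_mod_cast h2
  omega

lemma inDual_of_span {G : Submodule (ZMod 2) (PauliT ι)} {S : Set (PauliT ι)}
    (hS : Submodule.span (ZMod 2) S = G) {v : PauliT ι} (h : ∀ s ∈ S, sympl v s = 0) :
    inDual G v := by
  intro g hg
  rw [← hS] at hg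
  induction hg using Submodule.span_induction with
  | mem x hx => exact h x hx
  | zero => exact sympl_zero_right _
  | add x y _ _ hx hy => rw [sympl_add_right, hx, hy, add_zero]
  | smul a x _ hx => rw [sympl_smul_right, hx, mul_zero]

lemma exists_gen {G : Submodule (ZMod 2) (PauliT ι)} {S : Set (PauliT ι)}
    (hS : Submodule.span (ZMod 2) S = G) (hd : 2 ≤ distG G) {v : PauliT ι}
    (hw : wt v ≤ 1) (hv : v ∉ G) : ∃ s ∈ S, sympl v s = 1 := by
  by_contra! hc
  exact hv (mem_of_dist hd (inDual_of_span hS fun s hs =>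
    (zmod2_cases _).resolve_right (hc s hs)) hw)

/-- Invariant of the growing chain. -/
def ChainInv (G : Submodule (ZMod 2) (PauliT ι)) (A : Finset ι) (u : PauliT ι) : Prop :=
  ∀ v, OnS A v → (∀ g ∈ G, OnS A g → sympl v g = 0) → sympl v u = 0 →
    v ∈ G ∨ v + resS A u ∈ G

/-- Local maximality. -/
def Lag (G : Submodule (ZMod 2) (PauliT ι)) (A : Finset ι) : Prop :=
  ∀ v, OnS A v → (∀ g ∈ G, OnS A g → sympl v g = 0) → v ∈ G

lemma mem_of_add_mem {G : Submodule (ZMod 2) (PauliT ι)} {v u : PauliT ι} (hu : u ∈ G)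
    (h : v + u ∈ G) : v ∈ G := by
  have := G.add_mem h hu
  rwa [add_assoc, pauli_add_self, add_zero] at this

lemma res_split {A : Finset ι} {r : ι} (hr : r ∉ A) {u : PauliT ι} (hu : OnS (insert r A) u) :
    resS A u + resS {r} u = u := by
  funext i
  by_cases h1 : i = r
  · subst h1; simp [resS, hr]
  · by_cases h2 : i ∈ A
    · simp [resS, h1, h2]
    · simp [resS, h1, h2, hu i (by simp [h1, h2])]

lemma inv_step {G : Submodule (ZMod 2) (PauliT ι)} (hG : IsStabilizer G) {A : Finset ι}
    {u : PauliT ι} (hI : ChainInv G A u) {r : ι} (hr : r ∉ A) (huG : u ∈ G)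
    (hu : OnS (insert r A) u) {u' : PauliT ι} (hu'G : u' ∈ G)
    (hQ : sympl (resS {r} u) u' = 1) : ChainInv G (insert r A) u' := by
  have hsub : A ⊆ insert r A := Finset.subset_insert _ _
  have hsubr : {r} ⊆ insert r A := by simp
  have aux0 : ∀ v, OnS A v → (∀ g ∈ G, OnS (insert r A) g → sympl v g = 0) →
      sympl v u' = 0 → v ∈ G := by
    intro v hv hc h0
    rcases hI v hv (fun g hg hgA => hc g hg (onS_mono hsub hgA)) (hc u huG hu) with h | h
    · exact h
    · exfalso
      have h1 := hG _ h _ hu'G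
      rw [sympl_add_left, h0, zero_add] at h1
      have h2 := hG _ huG _ hu'G
      rw [← res_split hr hu, sympl_add_left, h1, hQ] at h2
      revert h2; decide
  have aux : ∀ v, OnS (insert r A) v → (∀ g ∈ G, OnS (insert r A) g → sympl v g = 0) →
      sympl v u' = 0 → sympl v (resS {r} u) = 0 → v ∈ G := by
    intro v hv hc h0 hq
    rw [sympl_comm, sympl_res_single] at hq
    rw [sympl_res_single] at hQ
    have hl : ∀ a b c : ZMod 2 × ZMod 2, lf a b = 0 → lf a c = 1 → b = 0 ∨ b = a := by
      unfold lf; decide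
    rcases hl _ _ _ hq hQ with h | h
    · refine aux0 v ?_ hc h0
      intro i hi
      by_cases h1 : i = r
      · subst h1; exact h
      · exact hv i (by simp [h1, hi])
    · refine mem_of_add_mem huG (aux0 (v + u) ?_ ?_ ?_)
      · intro i hi
        by_cases h1 : i = r
        · subst h1
          have := congrFun (pauli_add_self u) i
          rw [Pi.add_apply, h]; exact this
        · exact onS_add hv hu i (by simp [h1, hi])
      · intro g hg hgA
        rw [sympl_add_left, hc g hg hgA, hG u huG g hg, add_zero]
      · rw [sympl_add_left, h0, hG u huG _ hu'G, add_zero]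
  intro v hv hc h0
  rcases zmod2_cases (sympl v (resS {r} u)) with hq | hq
  · exact Or.inl (aux v hv hc h0 hq)
  · refine Or.inr (aux _ (onS_add hv (onS_res _ _)) ?_ ?_ ?_)
    · intro g hg hgA
      rw [sympl_add_left, hc g hg hgA, sympl_res_left hgA, hG _ hu'G _ hg, add_zero]
    · rw [sympl_add_left, h0, sympl_res_left', sympl_self, add_zero]
    · rw [sympl_add_left, hq, sympl_res_left (onS_mono hsubr (onS_res _ _)), sympl_comm, hQ]
      decide

lemma lag_single {G : Submodule (ZMod 2) (PauliT ι)} {r : ι} {u : PauliT ι}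
    (hu : u r ≠ 0) (hG : resS {r} u ∈ G) : Lag G {r} := by
  intro v hv hc
  have h := hc _ hG (onS_res _ _)
  rw [sympl_comm, sympl_res_single] at h
  have hl : ∀ a b : ZMod 2 × ZMod 2, a ≠ 0 → lf a b = 0 → b = 0 ∨ b = a := by
    unfold lf; decide
  have hv' : v = resS {r} v := by
    funext i
    by_cases h1 : i = r
    · simp [resS, h1]
    · simp [resS, h1, hv i (by simpa using h1)]
  rcases hl _ _ hu h with h | h
  · have : v = 0 := by
      rw [hv']; funext i
      by_cases h1 : i = r
      · simp [resS, h1, h]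
      · simp [resS, h1]
    rw [this]; exact G.zero_mem
  · have : v = resS {r} u := by
      rw [hv']; funext i
      by_cases h1 : i = r
      · simp [resS, h1, h]
      · simp [resS, h1]
    rw [this]; exact hG

lemma three_supp {m : ℕ} {u : PauliT ι} (hw : wt u ≤ m) {B : Finset ι} (hB : B.card = m)
    (hBu : ∀ i ∈ B, u i ≠ 0) : OnS B u := by
  intro x hx
  by_contra h
  have : insert x B ⊆ Finset.univ.filter fun i => u i ≠ 0 := by
    intro i hi
    rcases Finset.mem_insert.1 hi with rfl | hi
    · simpa using h
    · simpa using hBu i hi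
  have h2 := Finset.card_le_card this
  rw [Finset.card_insert_of_notMem hx, hB] at h2
  unfold wt at hw
  omega

lemma chain {G : Submodule (ZMod 2) (PauliT ι)} (hG : IsStabilizer G) (hd : 2 ≤ distG G)
    {S : Set (PauliT ι)} (hS : Submodule.span (ZMod 2) S = G) (hw : ∀ s ∈ S, wt s ≤ 3) :
    ∀ (N : ℕ) (A : Finset ι) (u : PauliT ι), Fintype.card ι ≤ A.card + N → A.Nonempty →
      u ∈ G → ChainInv G A u → (∃ r, OnS (insert r A) u) → ∃ B : Finset ι, B.Nonempty ∧ Lag G B := by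
  have fin : ∀ (A : Finset ι) (u : PauliT ι), A.Nonempty → u ∈ G → ChainInv G A u → OnS A u →
      ∃ B : Finset ι, B.Nonempty ∧ Lag G B := by
    intro A u hA huG hI hu
    refine ⟨A, hA, fun v hv hc => ?_⟩
    have hr : resS A u = u := by
      funext i
      by_cases h : i ∈ A
      · simp [resS, h]
      · simp [resS, h, hu i h]
    rcases hI v hv hc (hc u huG hu) with h | h
    · exact h
    · rw [hr] at h; exact mem_of_add_mem huG h
  intro N
  induction N with
  | zero =>
    intro A u hN hA huG hI _
    have : A = Finset.univ := Finset.card_eq_iff_eq_univ A |>.1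
      (le_antisymm (Finset.card_le_univ _) (by simpa using hN))
    exact fin A u hA huG hI (by intro i hi; simp [this] at hi)
  | succ N ih =>
    rintro A u hN hA huG hI ⟨r, hu⟩
    by_cases hur : r ∈ A ∨ u r = 0
    · refine fin A u hA huG hI ?_
      intro i hi
      rcases hur with h | h
      · exact hu i (by simpa [Finset.insert_eq_of_mem h] using hi)
      · by_cases h1 : i = r
        · rw [h1]; exact h
        · exact hu i (by simp [h1, hi])
    · push Not at hur
      obtain ⟨hr, hur⟩ := hur
      by_cases hQ : resS {r} u ∈ G
      · exact ⟨{r}, by simp, lag_single hur hQ⟩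
      · obtain ⟨u', hu'S, hu'⟩ := exists_gen hS hd (wt_res_single r u) hQ
        have hu'G : u' ∈ G := hS ▸ Submodule.subset_span hu'S
        refine ih (insert r A) u' ?_ (by simp) hu'G (inv_step hG hI hr huG hu hu'G hu') ?_
        · rw [Finset.card_insert_of_notMem hr]; omega
        · by_cases hon : OnS (insert r A) u'
          · exact ⟨r, onS_mono (Finset.subset_insert _ _) hon⟩
          · unfold OnS at hon
            push Not at hon
            obtain ⟨s, hs, hs0⟩ := hon
            have h2 := hG _ huG _ hu'G
            rw [← res_split hr hu, sympl_add_left, hu'] at h2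
            have h3 : ∃ a ∈ A, u' a ≠ 0 := by
              by_contra! hc
              have : sympl (resS A u) u' = 0 := by
                rw [sympl_eq]
                refine Finset.sum_eq_zero fun i _ => ?_
                by_cases h : i ∈ A
                · simp [lf, hc i h]
                · simp [lf, resS, h]
              rw [this] at h2
              revert h2; decide
            obtain ⟨a, ha, ha0⟩ := h3
            have hr0 : u' r ≠ 0 := by
              intro h
              rw [sympl_res_single, h] at hu'
              simp [lf] at hu'
            simp only [Finset.mem_insert, not_or] at hs
            have hsa : s ≠ a := fun h => hs.2 (h ▸ ha)
            have hra : r ≠ a := fun h => hr (h ▸ ha)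
            refine ⟨s, onS_mono ?_ (three_supp (B := {s, r, a}) (hw _ hu'S) ?_ ?_)⟩
            · intro x hx; simp at hx ⊢; rcases hx with h | h | h
              · exact Or.inl h
              · exact Or.inr (Or.inl h)
              · exact Or.inr (Or.inr (h ▸ ha))
            · rw [Finset.card_eq_three]; exact ⟨s, r, a, hs.1, hsa, hra, rfl⟩
            · intro i hi; simp at hi; rcases hi with h | h | h <;> rw [h] <;> assumption

lemma exists_lag {G : Submodule (ZMod 2) (PauliT ι)} (hG : IsStabilizer G) (hd : 2 ≤ distG G)
    {S : Set (PauliT ι)} (hS : Submodule.span (ZMod 2) S = G) (hw : ∀ s ∈ S, wt s ≤ 3)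
    (hlow : ∃ g ∈ G, g ≠ 0 ∧ wt g < 3) : ∃ B : Finset ι, B.Nonempty ∧ Lag G B := by
  obtain ⟨g, hg, hg0, hgw⟩ := hlow
  obtain ⟨i, hi⟩ := Function.ne_iff.1 hg0
  refine chain hG hd hS hw (Fintype.card ι) {i} g (by omega) (by simp) hg ?_ ?_
  · intro v hv hc h0
    rw [← sympl_res_right hv, sympl_comm, sympl_res_single] at h0
    have hl : ∀ a b : ZMod 2 × ZMod 2, a ≠ 0 → lf a b = 0 → b = 0 ∨ b + a = 0 := by
      unfold lf; decide
    rcases hl _ _ hi h0 with h | h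
    · left
      have : v = 0 := by
        funext j
        by_cases hj : j = i
        · rw [hj, h]; rfl
        · exact hv j (by simpa using hj)
      rw [this]; exact G.zero_mem
    · right
      have : v + resS {i} g = 0 := by
        funext j
        by_cases hj : j = i
        · subst hj; simpa [resS] using h
        · simp [resS, hj, hv j (by simpa using hj)]
      rw [this]; exact G.zero_mem
  · by_cases h : ∃ j, j ≠ i ∧ g j ≠ 0
    · obtain ⟨j, hj, hj0⟩ := h
      refine ⟨j, three_supp (m := 2) (by omega) (Finset.card_pair hj) ?_⟩
      intro x hx; simp at hx; rcases hx with h | h <;> rw [h] <;> assumption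
    · push Not at h
      exact ⟨i, fun x hx => h x (by simpa using hx)⟩

lemma sympl_pair {i j : ι} (hij : i ≠ j) {u : PauliT ι} (hu : OnS {i, j} u) (v : PauliT ι) :
    sympl v u = lf (v i) (u i) + lf (v j) (u j) := by
  rw [sympl_eq, ← Finset.sum_pair (f := fun x => lf (v x) (u x)) hij]
  refine (Finset.sum_subset (Finset.subset_univ _) ?_).symm
  intro x _ hx
  simp [hu x hx, lf]

lemma wt_lt {u v : PauliT ι} {i : ι} (hi : v i ≠ 0) (hui : u i = 0)
    (h : ∀ x, v x = 0 → u x = 0) : wt u < wt v := by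
  unfold wt
  apply Finset.card_lt_card
  rw [Finset.ssubset_iff_of_subset]
  · exact ⟨i, by simpa using hi, by simpa using hui⟩
  · intro x hx
    simp only [Finset.mem_filter, Finset.mem_univ, true_and] at hx ⊢
    exact fun h' => hx (h x h')

lemma weight_two {H : Submodule (ZMod 2) (PauliT ι)} (hH : IsStabilizer H) (hd : 2 ≤ distG H)
    {S : Set (PauliT ι)} (hS : Submodule.span (ZMod 2) S = H) (hw : ∀ s ∈ S, wt s ≤ 2) :
    ∀ (N : ℕ) (v : PauliT ι), wt v ≤ N → inDual H v → v ∈ H := by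
  intro N
  induction N with
  | zero => intro v hv hD; exact mem_of_dist hd hD (by omega)
  | succ N ih =>
    intro v hv hD
    have dualadd : ∀ x ∈ H, inDual H (v + x) := fun x hx g hg => by
      rw [sympl_add_left, hD g hg, hH x hx g hg, add_zero]
    by_cases hv0 : v = 0
    · rw [hv0]; exact H.zero_mem
    obtain ⟨i, hi⟩ := Function.ne_iff.1 hv0
    by_cases hP : resS {i} v ∈ H
    · refine mem_of_add_mem hP (ih _ ?_ (dualadd _ hP))
      have : wt (v + resS {i} v) < wt v := by
        refine wt_lt (i := i) hi ?_ ?_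
        · have := congrFun (pauli_add_self v) i
          simpa [resS] using this
        · intro x hx
          simp [resS, hx]
      omega
    obtain ⟨u, huS, hu⟩ := exists_gen hS hd (wt_res_single i v) hP
    have huH : u ∈ H := hS ▸ Submodule.subset_span huS
    rw [sympl_res_single] at hu
    have hU : resS {i} u ∉ H := by
      intro h
      have := hD _ h
      rw [sympl_comm, sympl_res_single] at this
      have e : ∀ a b, lf a b = 1 → lf b a = 0 → False := by unfold lf; decide
      exact e _ _ hu this
    obtain ⟨w, hwS, hww⟩ := exists_gen hS hd (wt_res_single i u) hU
    have hwH : w ∈ H := hS ▸ Submodule.subset_span hwS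
    rw [sympl_res_single] at hww
    have hj : ∃ j, j ≠ i ∧ lf (u j) (w j) ≠ 0 := by
      by_contra! hc
      have h1 := hH u huH w hwH
      rw [sympl_eq, Finset.sum_eq_single i (fun b _ hb => hc b hb) (by simp), hww] at h1
      revert h1; decide
    obtain ⟨j, hji, hj⟩ := hj
    have nz : ∀ a b, lf a b ≠ 0 → a ≠ 0 ∧ b ≠ 0 := by unfold lf; decide
    have hi' := nz _ _ (by rw [hww]; decide : lf (u i) (w i) ≠ 0)
    have hj' := nz _ _ hj
    have honu : OnS {i, j} u := three_supp (hw u huS) (Finset.card_pair hji.symm) (by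
      intro x hx; simp at hx; rcases hx with h | h <;> rw [h]
      exacts [hi'.1, hj'.1])
    have honw : OnS {i, j} w := three_supp (hw w hwS) (Finset.card_pair hji.symm) (by
      intro x hx; simp at hx; rcases hx with h | h <;> rw [h]
      exacts [hi'.2, hj'.2])
    have e1 := hD u huH
    have e2 := hD w hwH
    rw [sympl_pair hji.symm honu, hu] at e1
    rw [sympl_pair hji.symm honw] at e2
    have loc : ∀ a b c : ZMod 2 × ZMod 2, lf a b = 1 → lf b c = 1 →
        a + (c + lf a c • b) = 0 := by unfold lf; decide
    have one : ∀ a : ZMod 2, 1 + a = 0 → a = 1 := by decide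
    have eqq : ∀ a b : ZMod 2, a + b = 0 → b = a := by decide
    have l1 := loc _ _ _ hu hww
    have l2 := loc _ _ _ (one _ e1) ((zmod2_cases _).resolve_left hj)
    rw [eqq _ _ e2] at l2
    set a := lf (v i) (w i)
    have hx : w + a • u ∈ H := H.add_mem hwH (H.smul_mem _ huH)
    refine mem_of_add_mem hx (ih _ ?_ (dualadd _ hx))
    have : wt (v + (w + a • u)) < wt v := by
      refine wt_lt (i := i) hi (by simpa using l1) ?_
      intro x hx
      by_cases h1 : x = i
      · rw [h1]; simpa using l1
      by_cases h2 : x = j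
      · rw [h2]; simpa using l2
      have h3 : x ∉ ({i, j} : Finset ι) := by simp [h1, h2]
      simp [hx, honu x h3, honw x h3]
    omega

lemma distG_le {G : Submodule (ZMod 2) (PauliT ι)} {v : PauliT ι} (h : inDual G v) (h' : v ∉ G) :
    distG G ≤ (wt v : ℕ∞) := sInf_le ⟨v, ⟨h, h'⟩, rfl⟩

lemma wgt_le_of_span {G : Submodule (ZMod 2) (PauliT ι)} {S : Set (PauliT ι)} {m : ℕ}
    (hS : Submodule.span (ZMod 2) S = G) (hw : ∀ s ∈ S, wt s ≤ m) : Wgt G ≤ m := by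
  obtain ⟨f, hf, hsp, hli⟩ := Submodule.exists_fun_fin_finrank_span_eq (ZMod 2) S
  have hb : IsBasisFam G f := ⟨hli, hsp.trans hS⟩
  unfold Wgt
  refine iInf_le_of_le _ (iInf_le_of_le f (iInf_le_of_le hb ?_))
  refine Finset.sup_le fun i _ => ?_
  exact_mod_cast hw _ (hf i)

lemma span_of_wgt_le {G : Submodule (ZMod 2) (PauliT ι)} {m : ℕ} (h : Wgt G ≤ m) :
    ∃ S : Set (PauliT ι), Submodule.span (ZMod 2) S = G ∧ ∀ s ∈ S, wt s ≤ m := by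
  have h' : Wgt G < ((m + 1 : ℕ) : ℕ∞) := lt_of_le_of_lt h (by exact_mod_cast Nat.lt_succ_self m)
  unfold Wgt at h'
  simp only [iInf_lt_iff] at h'
  obtain ⟨r, g, hb, hlt⟩ := h'
  refine ⟨Set.range g, hb.2, ?_⟩
  rintro _ ⟨i, rfl⟩
  have h1 : (wt (g i) : ℕ∞) < ((m + 1 : ℕ) : ℕ∞) :=
    lt_of_le_of_lt (Finset.le_sup (f := fun i => (wt (g i) : ℕ∞)) (Finset.mem_univ i)) hlt
  have h2 : wt (g i) < m + 1 := by exact_mod_cast h1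
  omega

/-- The symplectic form as a bilinear form. -/
def symplB : LinearMap.BilinForm (ZMod 2) (PauliT ι) :=
  LinearMap.mk₂ (ZMod 2) sympl sympl_add_left
    (fun c u v => by rw [sympl_smul_left, smul_eq_mul])
    (fun u v w => sympl_add_right v w u)
    (fun c u v => by rw [sympl_smul_right, smul_eq_mul])

lemma symplB_ker : LinearMap.ker (symplB (ι := ι)) = ⊥ := by
  rw [LinearMap.ker_eq_bot']
  intro v hv
  funext i
  have h : ∀ a, lf (v i) a = 0 := by
    intro a
    have h1 : sympl v (resS {i} fun _ => a) = 0 := LinearMap.congr_fun hv _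
    rw [sympl_comm, sympl_res_single] at h1
    have e : ∀ a b, lf a b = 0 → lf b a = 0 := by unfold lf; decide
    exact e _ _ h1
  have e : ∀ b : ZMod 2 × ZMod 2, (∀ a, lf b a = 0) → b = 0 := by unfold lf; decide
  exact e _ h

lemma finrank_lag {G : Submodule (ZMod 2) (PauliT ι)} (hG : IsStabilizer G)
    (h : ∀ v, inDual G v → v ∈ G) : Module.finrank (ZMod 2) G = Fintype.card ι := by
  have h1 := LinearMap.BilinForm.finrank_add_finrank_orthogonal' (B := symplB (ι := ι)) G
  have h2 : LinearMap.BilinForm.orthogonal (symplB (ι := ι)) G = G := by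
    ext v
    rw [LinearMap.BilinForm.mem_orthogonal_iff]
    constructor
    · intro hv
      refine h v fun g hg => ?_
      rw [sympl_comm]; exact hv g hg
    · intro hv g hg
      exact hG g hg v hv
  rw [h2, symplB_ker, inf_bot_eq, finrank_bot, add_zero, Module.finrank_pi_fintype] at h1
  simp at h1
  omega

lemma dist_top {G : Submodule (ZMod 2) (PauliT ι)}
    (h : ∀ v, inDual G v → v ∈ G) : distG G = ⊤ := by
  unfold distG
  have : {v | inDual G v ∧ v ∉ G} = ∅ := by
    ext v; simp; exact h v
  rw [this]; simp

section split
variable (p : ι → Prop) [Fintype {x // p x}] [Fintype {x // ¬ p x}]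

lemma split_sympl (u v : PauliT ι) : sympl u v =
    sympl (splitEquiv p u).1 (splitEquiv p v).1 + sympl (splitEquiv p u).2 (splitEquiv p v).2 := by
  simp only [sympl_eq]
  rw [← Equiv.sum_comp (Equiv.sumCompl p), Fintype.sum_sum_type]
  rfl

lemma wt_eq_sum (v : PauliT ι) : wt v = ∑ i, if v i ≠ 0 then 1 else 0 := by
  unfold wt; rw [Finset.card_filter]

lemma split_wt (v : PauliT ι) : wt v = wt (splitEquiv p v).1 + wt (splitEquiv p v).2 := by
  simp only [wt_eq_sum]
  rw [← Equiv.sum_comp (Equiv.sumCompl p), Fintype.sum_sum_type]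
  rfl

variable {p} {G : Submodule (ZMod 2) (PauliT ι)} {G₁ : Submodule (ZMod 2) (PauliT {x // p x})}
  {G₂ : Submodule (ZMod 2) (PauliT {x // ¬ p x})}

lemma mem_tensor {v : PauliT ι} : v ∈ tensorAlong p G₁ G₂ ↔
    (splitEquiv p v).1 ∈ G₁ ∧ (splitEquiv p v).2 ∈ G₂ := by
  simp [tensorAlong, Submodule.mem_prod]

lemma mem_tensor' {a : PauliT {x // p x}} {b : PauliT {x // ¬ p x}} :
    (splitEquiv p).symm (a, b) ∈ tensorAlong p G₁ G₂ ↔ a ∈ G₁ ∧ b ∈ G₂ := by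
  rw [mem_tensor, LinearEquiv.apply_symm_apply]

lemma stab_left (h : IsStabilizer (tensorAlong p G₁ G₂)) : IsStabilizer G₁ := by
  intro u hu v hv
  have := h _ (mem_tensor'.2 ⟨hu, G₂.zero_mem⟩) _ (mem_tensor'.2 ⟨hv, G₂.zero_mem⟩)
  rw [split_sympl p] at this
  simpa [sympl_zero_left] using this

lemma stab_right (h : IsStabilizer (tensorAlong p G₁ G₂)) : IsStabilizer G₂ := by
  intro u hu v hv
  have := h _ (mem_tensor'.2 ⟨G₁.zero_mem, hu⟩) _ (mem_tensor'.2 ⟨G₁.zero_mem, hv⟩)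
  rw [split_sympl p] at this
  simpa [sympl_zero_left] using this

lemma dual_tensor {v : PauliT ι} : inDual (tensorAlong p G₁ G₂) v ↔
    inDual G₁ (splitEquiv p v).1 ∧ inDual G₂ (splitEquiv p v).2 := by
  constructor
  · intro h
    constructor
    · intro g hg
      have := h _ (mem_tensor'.2 ⟨hg, G₂.zero_mem⟩)
      rw [split_sympl p] at this
      simpa [sympl_zero_right] using this
    · intro g hg
      have := h _ (mem_tensor'.2 ⟨G₁.zero_mem, hg⟩)
      rw [split_sympl p] at this
      simpa [sympl_zero_right] using this
  · rintro ⟨h1, h2⟩ g hg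
    rw [mem_tensor] at hg
    rw [split_sympl p, h1 _ hg.1, h2 _ hg.2, add_zero]

lemma dist_tensor (h : ∀ v, inDual G₁ v → v ∈ G₁) :
    distG G₂ = distG (tensorAlong p G₁ G₂) := by
  apply le_antisymm
  · refine le_sInf ?_
    rintro _ ⟨v, ⟨hv, hv'⟩, rfl⟩
    rw [dual_tensor] at hv
    rw [mem_tensor] at hv'
    refine (distG_le hv.2 fun h2 => hv' ⟨h _ hv.1, h2⟩).trans ?_
    have := split_wt p v
    dsimp only
    exact_mod_cast (by omega : wt (splitEquiv p v).2 ≤ wt v)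
  · refine le_sInf ?_
    rintro _ ⟨v, ⟨hv, hv'⟩, rfl⟩
    refine (distG_le (v := (splitEquiv p).symm (0, v)) ?_ ?_).trans ?_
    · rw [dual_tensor, LinearEquiv.apply_symm_apply]
      exact ⟨fun g _ => sympl_zero_left g, hv⟩
    · rw [mem_tensor']; exact fun h2 => hv' h2.2
    · have := split_wt p ((splitEquiv p).symm (0, v))
      rw [LinearEquiv.apply_symm_apply] at this
      have h0 : wt (0 : PauliT {x // p x}) = 0 := by simp [wt]
      dsimp only at this ⊢
      rw [this, h0, zero_add]

lemma wgt_left {m : ℕ} (h : Wgt (tensorAlong p G₁ G₂) ≤ m) : Wgt G₁ ≤ m := by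
  obtain ⟨S, hS, hw⟩ := span_of_wgt_le h
  let f : PauliT ι →ₗ[ZMod 2] PauliT {x // p x} :=
    (LinearMap.fst _ _ _).comp (splitEquiv p).toLinearMap
  refine wgt_le_of_span (S := f '' S) ?_ ?_
  · rw [Submodule.span_image, hS]
    ext a
    constructor
    · rintro ⟨v, hv, rfl⟩; exact (mem_tensor.1 hv).1
    · intro ha
      exact ⟨(splitEquiv p).symm (a, 0), mem_tensor'.2 ⟨ha, G₂.zero_mem⟩, by simp [f]⟩
  · rintro _ ⟨s, hs, rfl⟩
    have h1 := split_wt p s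
    have h2 := hw s hs
    show wt (splitEquiv p s).1 ≤ m
    omega

lemma wgt_right {m : ℕ} (h : Wgt (tensorAlong p G₁ G₂) ≤ m) : Wgt G₂ ≤ m := by
  obtain ⟨S, hS, hw⟩ := span_of_wgt_le h
  let f : PauliT ι →ₗ[ZMod 2] PauliT {x // ¬ p x} :=
    (LinearMap.snd _ _ _).comp (splitEquiv p).toLinearMap
  refine wgt_le_of_span (S := f '' S) ?_ ?_
  · rw [Submodule.span_image, hS]
    ext a
    constructor
    · rintro ⟨v, hv, rfl⟩; exact (mem_tensor.1 hv).2
    · intro ha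
      exact ⟨(splitEquiv p).symm (0, a), mem_tensor'.2 ⟨G₁.zero_mem, ha⟩, by simp [f]⟩
  · rintro _ ⟨s, hs, rfl⟩
    have h1 := split_wt p s
    have h2 := hw s hs
    show wt (splitEquiv p s).2 ≤ m
    omega

lemma finrank_tensor : Module.finrank (ZMod 2) (tensorAlong p G₁ G₂) =
    Module.finrank (ZMod 2) G₁ + Module.finrank (ZMod 2) G₂ := by
  let e : tensorAlong p G₁ G₂ ≃ₗ[ZMod 2] G₁ × G₂ :=
    { toFun := fun v => (⟨_, (mem_tensor.1 v.2).1⟩, ⟨_, (mem_tensor.1 v.2).2⟩)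
      invFun := fun w => ⟨(splitEquiv p).symm (w.1, w.2), mem_tensor'.2 ⟨w.1.2, w.2.2⟩⟩
      map_add' := fun u v => by ext <;> simp
      map_smul' := fun c v => by ext <;> simp
      left_inv := fun v => by ext <;> simp
      right_inv := fun w => by ext <;> simp }
  rw [e.finrank_eq, Module.finrank_prod]

end split

lemma split_of_lag {G : Submodule (ZMod 2) (PauliT ι)} (hG : IsStabilizer G) {A : Finset ι}
    (hL : Lag G A) :
    ∃ (G₁ : Submodule (ZMod 2) (PauliT {x : ι // x ∈ A}))
      (G₂ : Submodule (ZMod 2) (PauliT {x : ι // ¬ x ∈ A})),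
      G = tensorAlong (fun x => x ∈ A) G₁ G₂ ∧ ∀ v, inDual G₁ v → v ∈ G₁ := by
  let e := splitEquiv (fun x : ι => x ∈ A)
  have honA : ∀ a, OnS A (e.symm (a, 0)) := by
    intro a i hi
    have : (e (e.symm (a, 0))).2 ⟨i, hi⟩ = 0 := by rw [LinearEquiv.apply_symm_apply]; rfl
    exact this
  have hsnd : ∀ v, OnS A v → (e v).2 = 0 := by
    intro v hv; funext x; exact hv x.1 x.2
  let G₁ := G.comap (e.symm.toLinearMap.comp (LinearMap.inl (ZMod 2) _ _))
  let G₂ := G.comap (e.symm.toLinearMap.comp (LinearMap.inr (ZMod 2) _ _))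
  have m1 : ∀ a, a ∈ G₁ ↔ e.symm (a, 0) ∈ G := fun a => Iff.rfl
  have m2 : ∀ b, b ∈ G₂ ↔ e.symm (0, b) ∈ G := fun b => Iff.rfl
  refine ⟨G₁, G₂, ?_, ?_⟩
  · ext v
    rw [mem_tensor, m1, m2]
    have hsum : v = e.symm ((e v).1, 0) + e.symm (0, (e v).2) := by
      rw [← map_add]; simp
    constructor
    · intro hv
      have h1 : e.symm ((e v).1, 0) ∈ G := by
        refine hL _ (honA _) ?_
        intro g hg hgA
        have h0 := hG v hv g hg
        rw [split_sympl (fun x => x ∈ A)] at h0 ⊢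
        rw [LinearEquiv.apply_symm_apply]
        have hg2 := hsnd g hgA
        change sympl (e v).1 (e g).1 + sympl (e v).2 (e g).2 = 0 at h0
        change sympl (e v).1 (e g).1 + sympl 0 (e g).2 = 0
        rw [hg2, sympl_zero_right] at *
        exact h0
      refine ⟨h1, ?_⟩
      rw [hsum] at hv
      exact (G.add_mem_iff_right h1).1 hv
    · rintro ⟨h1, h2⟩
      rw [hsum]; exact G.add_mem h1 h2
  · intro a ha
    rw [m1]
    refine hL _ (honA _) ?_
    intro g hg hgA
    have hg2 := hsnd g hgA
    have hg1 : (e g).1 ∈ G₁ := by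
      rw [m1, ← hg2]; simpa using hg
    rw [split_sympl (fun x => x ∈ A), LinearEquiv.apply_symm_apply]
    change sympl a (e g).1 + sympl 0 (e g).2 = 0
    rw [ha _ hg1, sympl_zero_left, add_zero]

/-- an `[[n,k,d;3]]` code (`k ≥ 1`, `d ≥ 2`) containing a nonzero element of
weight `< 3` factorizes as `[[n-m,0]] ⊗ [[m,k,d;3]]` for some `m < n`. -/
theorem clean_weight_three_codes (n k : ℕ) (d : ℕ∞) (hk : 1 ≤ k) (hd : 2 ≤ d)
    (G : Submodule (ZMod 2) (Pauli n)) (hG : IsStabilizer G)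
    (hdim : Module.finrank (ZMod 2) ↥G = n - k) (hdist : distG G = d)
    (hW : Wgt G = 3)
    (hlow : ∃ g ∈ G, g ≠ 0 ∧ wt g < 3) :
    ∃ m : ℕ, m < n ∧
      ∃ A : Finset (Fin n), A.card = n - m ∧
        ∃ (G₁ : Submodule (ZMod 2) (PauliT {x : Fin n // x ∈ A}))
          (G₂ : Submodule (ZMod 2) (PauliT {x : Fin n // ¬ x ∈ A})),
          G = tensorAlong (fun x => x ∈ A) G₁ G₂ ∧
          IsStabilizer G₁ ∧ Module.finrank (ZMod 2) ↥G₁ = n - m ∧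
          distG G₁ = ⊤ ∧ Wgt G₁ ≤ 3 ∧
          IsStabilizer G₂ ∧ Module.finrank (ZMod 2) ↥G₂ = m - k ∧
          distG G₂ = d ∧ Wgt G₂ = 3 := by
  obtain ⟨S, hS, hw⟩ := span_of_wgt_le (m := 3) hW.le
  subst hdist
  obtain ⟨A, hA, hL⟩ := exists_lag hG hd hS hw hlow
  obtain ⟨G₁, G₂, hT, hL1⟩ := split_of_lag hG hL
  have hApos := hA.card_pos
  have hAle : A.card ≤ n := by simpa using Finset.card_le_univ A
  have hG' := hG
  rw [hT] at hG'
  have hS1 := stab_left hG'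
  have hS2 := stab_right hG'
  have hf1 := finrank_lag hS1 hL1
  rw [Fintype.card_coe] at hf1
  have hsum := finrank_tensor (p := fun x => x ∈ A) (G₁ := G₁) (G₂ := G₂)
  rw [← hT, hdim, hf1] at hsum
  have hdist := dist_tensor (p := fun x => x ∈ A) (G₁ := G₁) (G₂ := G₂) hL1
  rw [← hT] at hdist
  have hW' := hW.le
  rw [hT] at hW'
  refine ⟨n - A.card, by omega, A, by omega, G₁, G₂, hT, hS1, by omega, dist_top hL1,
    wgt_left (m := 3) hW', hS2, by omega, hdist, ?_⟩
  refine le_antisymm (wgt_right (m := 3) hW') ?_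
  by_contra hlt
  have hlt2 : Wgt G₂ ≤ (2 : ℕ) := by
    rw [not_le] at hlt
    exact Order.le_of_lt_add_one (by simpa using (show Wgt G₂ < 2 + 1 from hlt))
  obtain ⟨S', hS', hw'⟩ := span_of_wgt_le hlt2
  have hL2 : ∀ v, inDual G₂ v → v ∈ G₂ := fun v hv =>
    weight_two hS2 (hdist ▸ hd) hS' hw' (wt v) v le_rfl hv
  have hf2 := finrank_lag hS2 hL2
  have hc : Fintype.card {x : Fin n // ¬ x ∈ A} = n - A.card := by
    rw [Fintype.card_subtype_compl]; simp
  omega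

end
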